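/- Let k be a field of characteristic 2 and let σ be a k-algebra automorphism of k(x) of finite even order. Then σ has order exactly 2. -/

import Mathlib

/-!
Automorphisms of `K(X)` are Möbius transformations of `X`, and composition corresponds to the
(reversed) product in `GL₂(K)`, so the order of an automorphism is the order of its matrix modulo
scalars. In characteristic `p`, put `D = M - adj M`. Then `D ^ 2` is the scalar `discr M`, while
`D ^ p = M ^ p - adj (M ^ p)`. Hence `M ^ p` is scalar exactly when `discr M = 0`; only for `p = 2`
does sufficiency need another reason: then `tr M = 0` and Cayley–Hamilton reads `M ^ 2 = -det M`.
Finally, a power `M ^ m` is of the form `s • M + r`, of discriminant `s ^ 2 * discr M`; so if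
`M ^ m` has order `p` modulo scalars, then `s ≠ 0`, hence `discr M = 0` and `M ^ p` is scalar.
-/

section FinTwoMatrix

open Matrix

variable {R : Type*} [CommRing R]

theorem sub_adjugate_sq (M : Matrix (Fin 2) (Fin 2) R) :
    (M - M.adjugate) ^ 2 = scalar (Fin 2) M.discr := by
  rw [discr_fin_two, trace_fin_two, det_fin_two, adjugate_fin_two, sq]
  ext i j
  fin_cases i <;> fin_cases j <;> simp [mul_apply] <;> ring

theorem discr_smul_add_scalar (M : Matrix (Fin 2) (Fin 2) R) (s r : R) :
    (s • M + scalar (Fin 2) r).discr = s ^ 2 * M.discr := by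
  simp only [discr_fin_two, trace_fin_two, det_fin_two, Matrix.add_apply, Matrix.smul_apply,
    smul_eq_mul, scalar_apply, diagonal_apply_eq, diagonal_apply_ne, ne_eq, zero_ne_one,
    one_ne_zero, not_false_eq_true]
  ring

theorem sq_eq_trace_smul_sub_det (M : Matrix (Fin 2) (Fin 2) R) :
    M ^ 2 = M.trace • M - scalar (Fin 2) M.det := by
  nontriviality R
  have hcayley : M ^ 2 - M.trace • M + scalar (Fin 2) M.det = 0 := by
    simpa [charpoly_fin_two, Algebra.algebraMap_eq_smul_one, ← smul_one_eq_diagonal]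
      using M.aeval_self_charpoly
  linear_combination (norm := module) hcayley

theorem exists_pow_eq_smul_add_scalar (M : Matrix (Fin 2) (Fin 2) R) (m : ℕ) :
    ∃ s r : R, M ^ m = s • M + scalar (Fin 2) r := by
  induction m with
  | zero => exact ⟨0, 1, by simp⟩
  | succ m ih =>
    obtain ⟨s, r, h⟩ := ih
    refine ⟨s * M.trace + r, -(s * M.det), ?_⟩
    rw [pow_succ, h, add_mul, smul_mul_assoc, ← sq, sq_eq_trace_smul_sub_det]
    simp only [scalar_apply, ← smul_one_eq_diagonal, smul_mul_assoc, one_mul]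
    module

theorem isParabolic_of_isParabolic_pow [NoZeroDivisors R] {M : Matrix (Fin 2) (Fin 2) R} {m : ℕ}
    (h : (M ^ m).IsParabolic) : M.IsParabolic := by
  obtain ⟨hscalar, hdiscr⟩ := h
  obtain ⟨s, r, hpow⟩ := exists_pow_eq_smul_add_scalar M m
  have hs : s ≠ 0 := by
    rintro rfl
    exact hscalar ⟨r, by simp [hpow]⟩
  constructor
  · rintro ⟨a, rfl⟩
    exact hscalar ⟨a ^ m, map_pow _ _ _⟩
  · rw [hpow, discr_smul_add_scalar] at hdiscr
    exact (mul_eq_zero.mp hdiscr).resolve_left (pow_ne_zero 2 hs)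

theorem mem_range_scalar_of_adjugate_eq_self (h2 : ∀ x : R, 2 * x = 0 → x = 0)
    {M : Matrix (Fin 2) (Fin 2) R} (hM : M.adjugate = M) :
    M ∈ Set.range (scalar (Fin 2)) := by
  rw [adjugate_fin_two] at hM
  have h00 : M 1 1 = M 0 0 := congr_fun₂ hM 0 0
  have h01 : -M 0 1 = M 0 1 := congr_fun₂ hM 0 1
  have h10 : -M 1 0 = M 1 0 := congr_fun₂ hM 1 0
  refine ⟨M 0 0, ?_⟩
  ext i j
  fin_cases i <;> fin_cases j
  · simp
  · simpa using (h2 _ (by linear_combination -h01)).symm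
  · simpa using (h2 _ (by linear_combination -h10)).symm
  · simpa using h00.symm

variable (p : ℕ) [Fact p.Prime] [CharP R p]

theorem sub_adjugate_pow_char (M : Matrix (Fin 2) (Fin 2) R) :
    (M - M.adjugate) ^ p = M ^ p - (M ^ p).adjugate := by
  have hcomm : Commute M M.adjugate := (mul_adjugate M).trans (adjugate_mul M).symm
  rw [sub_pow_char_of_commute _ hcomm, adjugate_pow]

theorem pow_char_mem_range_scalar_iff [IsReduced R] {M : Matrix (Fin 2) (Fin 2) R} :
    M ^ p ∈ Set.range (scalar (Fin 2)) ↔ M.discr = 0 := by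
  constructor
  · rintro ⟨a, ha⟩
    have hD : (M - M.adjugate) ^ p = 0 := by
      rw [sub_adjugate_pow_char, ← ha, sub_eq_zero]
      simp [adjugate_diagonal]
    have hpow : M.discr ^ p = 0 := by
      rw [← scalar_inj (n := Fin 2), map_pow, ← sub_adjugate_sq, pow_right_comm, hD, map_zero,
        zero_pow two_ne_zero]
    exact eq_zero_of_pow_eq_zero hpow
  · intro hdiscr
    obtain rfl | hodd := (Fact.out : p.Prime).eq_two_or_odd'
    · have htrace : M.trace ^ 2 = 0 := by
        linear_combination M.discr_fin_two.symm.trans hdiscr +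
          2 * M.det * CharP.cast_eq_zero R 2
      refine ⟨-M.det, ?_⟩
      rw [sq_eq_trace_smul_sub_det, eq_zero_of_pow_eq_zero htrace]
      simp
    · have hD : (M - M.adjugate) ^ p = 0 := by
        refine pow_eq_zero_of_le (Fact.out : p.Prime).two_le ?_
        rw [sub_adjugate_sq, hdiscr, map_zero]
      rw [sub_adjugate_pow_char, sub_eq_zero] at hD
      refine mem_range_scalar_of_adjugate_eq_self (fun x hx ↦ ?_) hD.symm
      obtain ⟨n, hn⟩ := hodd
      have hchar : (2 * n + 1 : R) = 0 := by exact_mod_cast hn ▸ CharP.cast_eq_zero R p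
      linear_combination x * hchar - n * hx

end FinTwoMatrix

section MobiusAutomorphism

open scoped IntermediateField
open RatFunc Matrix.GeneralLinearGroup

variable {K : Type*} [Field K]

theorem algHom_ratFunc_ext {A : Type*} [Semiring A] [Algebra K A] {φ ψ : RatFunc K →ₐ[K] A}
    (h : φ X = ψ X) : φ = ψ :=
  IsLocalization.algHom_ext (nonZeroDivisors (Polynomial K)) <| Polynomial.algHom_ext <| by
    change φ (algebraMap _ _ Polynomial.X) = ψ (algebraMap _ _ Polynomial.X)
    rwa [algebraMap_X]

theorem eq_zero_of_C_mul_num_add_C_mul_denom_eq_zero {f : RatFunc K} (hf : ∀ c, f ≠ C c)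
    {u v : K} (h : Polynomial.C u * f.num + Polynomial.C v * f.denom = 0) : u = 0 ∧ v = 0 := by
  have hu : u = 0 := by
    by_contra hu
    refine hf (-v / u) ?_
    have hCu : C u ≠ (0 : RatFunc K) := (map_ne_zero C).mpr hu
    have hdenom := algebraMap_ne_zero f.denom_ne_zero
    have hmap := congrArg (algebraMap (Polynomial K) (RatFunc K)) h
    simp only [map_add, map_mul, algebraMap_C, map_zero] at hmap
    rw [map_div₀, map_neg, ← num_div_denom f, div_eq_div_iff hdenom hCu]
    linear_combination hmap
  simpa [hu, f.denom_ne_zero] using h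

variable [DecidableEq (RatFunc K)]

theorem exists_smul_X_eq_of_natDegree_le_one {f : RatFunc K} (hf : ∀ c, f ≠ C c)
    (hnum : f.num.natDegree ≤ 1) (hdenom : f.denom.natDegree ≤ 1) :
    ∃ g : GL (Fin 2) K, g.map C • ((X : RatFunc K) : OnePoint (RatFunc K)) = f := by
  obtain ⟨a, b, hnum⟩ := Polynomial.exists_eq_X_add_C_of_natDegree_le_one hnum
  obtain ⟨c, d, hdenom⟩ := Polynomial.exists_eq_X_add_C_of_natDegree_le_one hdenom
  have hdet : (!![a, b; c, d]).det ≠ 0 := by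
    intro hdet
    obtain ⟨v, hv, hvM⟩ := Matrix.exists_vecMul_eq_zero_iff.mpr hdet
    have h0 : v 0 * a + v 1 * c = 0 := by simpa [Matrix.vecMul_eq_sum] using congr_fun hvM 0
    have h1 : v 0 * b + v 1 * d = 0 := by simpa [Matrix.vecMul_eq_sum] using congr_fun hvM 1
    have hdep : Polynomial.C (v 0) * f.num + Polynomial.C (v 1) * f.denom = 0 := by
      rw [hnum, hdenom]
      calc _ = Polynomial.C (v 0 * a + v 1 * c) * Polynomial.X +
            Polynomial.C (v 0 * b + v 1 * d) := by simp only [map_add, map_mul]; ring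
        _ = 0 := by simp [h0, h1]
    obtain ⟨hv0, hv1⟩ := eq_zero_of_C_mul_num_add_C_mul_denom_eq_zero hf hdep
    exact hv (by ext i; fin_cases i <;> assumption)
  refine ⟨mkOfDetNeZero _ hdet, ?_⟩
  have hnumX : algebraMap _ (RatFunc K) f.num = C a * X + C b := by simp [hnum]
  have hdenomX : algebraMap _ (RatFunc K) f.denom = C c * X + C d := by simp [hdenom]
  have hne : C c * X + C d ≠ (0 : RatFunc K) := hdenomX ▸ algebraMap_ne_zero f.denom_ne_zero
  have hf_eq : f = (C a * X + C b) / (C c * X + C d) := by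
    rw [← hnumX, ← hdenomX, num_div_denom]
  rw [OnePoint.smul_some_eq_ite, hf_eq]
  simp [mkOfDetNeZero, hne]

theorem exists_smul_X_eq_of_adjoin_eq_top {f : RatFunc K} (hf : K⟮f⟯ = ⊤) :
    ∃ g : GL (Fin 2) K, g.map C • ((X : RatFunc K) : OnePoint (RatFunc K)) = f := by
  have hdeg : max f.num.natDegree f.denom.natDegree = 1 := by
    rw [← finrank_eq_max_natDegree, hf, IntermediateField.finrank_top]
  refine exists_smul_X_eq_of_natDegree_le_one ?_ (hdeg ▸ le_max_left ..) (hdeg ▸ le_max_right ..)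
  rintro c rfl
  simp at hdeg

/-- The automorphism `σ` of `K(X)` sends `X` to the Möbius transform `(a X + b) / (c X + d)` of
`X` by the matrix `g = !![a, b; c, d]`. The equation is stated in `ℙ¹(K(X))`, where Mathlib's
action of `GL₂` by Möbius transformations lives. -/
def IsMobius (σ : RatFunc K ≃ₐ[K] RatFunc K) (g : GL (Fin 2) K) : Prop :=
  g.map C • ((X : RatFunc K) : OnePoint (RatFunc K)) = (σ X : RatFunc K)

namespace IsMobius

variable {σ τ : RatFunc K ≃ₐ[K] RatFunc K} {g h : GL (Fin 2) K}

theorem one : IsMobius (1 : RatFunc K ≃ₐ[K] RatFunc K) 1 := by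
  simp [IsMobius]

theorem mul (hσ : IsMobius σ g) (hτ : IsMobius τ h) : IsMobius (σ * τ) (h * g) := by
  have hC : (σ : RatFunc K →+* RatFunc K).comp C = C := by
    ext c
    simpa using σ.commutes c
  calc (h * g).map C • ((X : RatFunc K) : OnePoint (RatFunc K))
      = h.map C • (σ X : RatFunc K) := by rw [map_mul, mul_smul, hσ]
    _ = OnePoint.map (σ : RatFunc K →+* RatFunc K) (h.map C • (X : RatFunc K)) := by
        rw [OnePoint.map_smul, ← map_comp_apply, ← map_comp, hC]
        rfl
    _ = ((σ * τ) X : RatFunc K) := by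
        rw [hτ]
        rfl

theorem pow (hσ : IsMobius σ g) (n : ℕ) : IsMobius (σ ^ n) (g ^ n) := by
  induction n with
  | zero => simpa using one
  | succ n ih =>
    rw [pow_succ, pow_succ']
    exact ih.mul hσ

theorem eq_one_iff (hσ : IsMobius σ g) :
    σ = 1 ↔ g.val ∈ Set.range (Matrix.scalar (Fin 2)) := by
  have haeval : (g.map C).fixpointPolynomial.aeval (X : RatFunc K) =
      algebraMap (Polynomial K) (RatFunc K) g.fixpointPolynomial := by
    simp [fixpointPolynomial]
  calc σ = 1
      ↔ σ X = X := ⟨fun hone ↦ by simp [hone], fun hfix ↦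
        AlgEquiv.coe_toAlgHom_injective (algHom_ratFunc_ext hfix)⟩
    _ ↔ g.map C • ((X : RatFunc K) : OnePoint (RatFunc K)) = (X : RatFunc K) := by
        rw [hσ, OnePoint.coe_eq_coe]
    _ ↔ g.fixpointPolynomial = 0 := by
        rw [← fixpointPolynomial_aeval_eq_zero_iff, haeval,
          FaithfulSMul.algebraMap_eq_zero_iff]
    _ ↔ _ := fixpointPolynomial_eq_zero_iff

end IsMobius

theorem exists_isMobius (σ : RatFunc K ≃ₐ[K] RatFunc K) : ∃ g, IsMobius σ g := by
  apply exists_smul_X_eq_of_adjoin_eq_top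
  have hrange := IntermediateField.adjoin_map K {(X : RatFunc K)} σ.toAlgHom
  rw [adjoin_X, ← AlgHom.fieldRange_eq_map,
    AlgHom.fieldRange_eq_top.mpr σ.surjective] at hrange
  simpa using hrange.symm

end MobiusAutomorphism

theorem stmt_7_general (p : ℕ) [Fact p.Prime] {K : Type*} [Field K] [CharP K p]
    (σ : RatFunc K ≃ₐ[K] RatFunc K) (hfin : IsOfFinOrder σ) (hdvd : p ∣ orderOf σ) :
    orderOf σ = p := by
  classical
  obtain ⟨g, hg⟩ := exists_isMobius σ
  obtain ⟨m, hm⟩ := hdvd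
  have hm0 : m ≠ 0 := by
    rintro rfl
    simp [hfin.orderOf_pos.ne'] at hm
  have horder : orderOf (σ ^ m) = p := by
    rw [orderOf_pow_of_dvd hm0 ⟨p, by rw [hm, mul_comm]⟩, hm,
      Nat.mul_div_cancel _ (Nat.pos_of_ne_zero hm0)]
  have hne : σ ^ m ≠ 1 := by
    rw [Ne, ← orderOf_eq_one_iff, horder]
    exact (Fact.out : p.Prime).ne_one
  have hpow : (σ ^ m) ^ p = 1 := horder ▸ pow_orderOf_eq_one _
  have hparabolic : (g ^ m).val.IsParabolic :=
    ⟨(hg.pow m).eq_one_iff.not.mp hne,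
      (pow_char_mem_range_scalar_iff p).mp (((hg.pow m).pow p).eq_one_iff.mp hpow)⟩
  have hdiscr : g.val.discr = 0 := (isParabolic_of_isParabolic_pow hparabolic).2
  have hσp : σ ^ p = 1 := (hg.pow p).eq_one_iff.mpr ((pow_char_mem_range_scalar_iff p).mpr hdiscr)
  exact Nat.dvd_antisymm (orderOf_dvd_of_pow_eq_one hσp) ⟨m, hm⟩

/-- If `k` has characteristic `2`, then a `k`-algebra automorphism of `k(x)` of finite
even order has order exactly `2`. -/
theorem stmt_7 (k : Type*) [Field k] [CharP k 2]
    (σ : RatFunc k ≃ₐ[k] RatFunc k) (hfin : IsOfFinOrder σ) (heven : Even (orderOf σ)) :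
    orderOf σ = 2 :=
  stmt_7_general 2 σ hfin heven.two_dvd
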